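/- In the split setup, suppose f : E_i' → C is a valid partial coloring (a star edge coloring of (V, E_i')). Then for every pair (c₁,c₂) ∈ C×C: A_L^(4) ∩ A_R^(7) = ∅ and A_R^(4) ∩ A_L^(7) = ∅. -/

import Mathlib

variable {V C : Type*}

def N1 (X : Set V) (Es : Set (Sym2 V)) (f : Sym2 V → C) (c₁ c₂ : C) : Set V :=
  {v₀ | v₀ ∈ X ∧ ∃ v₁ v₂, s(v₀, v₁) ∈ Es ∧ s(v₁, v₂) ∈ Es ∧
    f s(v₀, v₁) = c₁ ∧ f s(v₁, v₂) = c₂}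

def N2 (X : Set V) (Es : Set (Sym2 V)) (f : Sym2 V → C) (c₁ c₂ : C) : Set V :=
  {v₀ | v₀ ∈ X ∧ ∃ v₁ v₂, s(v₀, v₁) ∈ Es ∧ s(v₁, v₂) ∈ Es ∧
    f s(v₀, v₁) = c₂ ∧ f s(v₁, v₂) = c₁}

def N3 (X : Set V) (Es : Set (Sym2 V)) (f : Sym2 V → C) (c₁ c₂ : C) : Set (V × V) :=
  {p | p.1 ∈ X ∧ p.2 ∈ X ∧ ∃ v₁, s(p.1, v₁) ∈ Es ∧ s(v₁, p.2) ∈ Es ∧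
    f s(p.1, v₁) = c₁ ∧ f s(v₁, p.2) = c₂}

def N4 (X : Set V) (Es : Set (Sym2 V)) (f : Sym2 V → C) (c₁ c₂ : C) : Set V :=
  {v₀ | v₀ ∈ X ∧ ∃ v₁ v₂ v₃, s(v₀, v₁) ∈ Es ∧ s(v₁, v₂) ∈ Es ∧ s(v₂, v₃) ∈ Es ∧
    f s(v₀, v₁) = c₁ ∧ f s(v₁, v₂) = c₂ ∧ f s(v₂, v₃) = c₁}

def N5 (X : Set V) (Es : Set (Sym2 V)) (f : Sym2 V → C) (c₁ c₂ : C) : Set V :=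
  {v₀ | v₀ ∈ X ∧ ∃ v₁ v₂ v₃, s(v₀, v₁) ∈ Es ∧ s(v₁, v₂) ∈ Es ∧ s(v₂, v₃) ∈ Es ∧
    f s(v₀, v₁) = c₂ ∧ f s(v₁, v₂) = c₁ ∧ f s(v₂, v₃) = c₂}

def N6 (X : Set V) (Es : Set (Sym2 V)) (f : Sym2 V → C) (c₁ c₂ : C) : Set V :=
  {v₀ | v₀ ∈ X ∧ ∃ v, s(v₀, v) ∈ Es ∧ f s(v₀, v) = c₁}

def N7 (X : Set V) (Es : Set (Sym2 V)) (f : Sym2 V → C) (c₁ c₂ : C) : Set V :=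
  {v₀ | v₀ ∈ X ∧ ∃ v, s(v₀, v) ∈ Es ∧ f s(v₀, v) = c₂}

def N8 (X : Set V) (Es : Set (Sym2 V)) (f : Sym2 V → C) (c₁ c₂ : C) : Set (V × V) :=
  {p | p.1 ∈ X ∧ p.2 ∈ X ∧ s(p.1, p.2) ∈ Es ∧ f s(p.1, p.2) = c₁}

def N9 (X : Set V) (Es : Set (Sym2 V)) (f : Sym2 V → C) (c₁ c₂ : C) : Set (V × V) :=
  {p | p.1 ∈ X ∧ p.2 ∈ X ∧ s(p.1, p.2) ∈ Es ∧ f s(p.1, p.2) = c₂}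

/-- A partial coloring (of the edges in `Es`) is proper if no two distinct edges of `Es`
sharing a vertex receive the same color. -/
def IsProper (Es : Set (Sym2 V)) (f : Sym2 V → C) : Prop :=
  ∀ e₁ ∈ Es, ∀ e₂ ∈ Es, e₁ ≠ e₂ → (∃ v, v ∈ e₁ ∧ v ∈ e₂) → f e₁ ≠ f e₂

/-- A partial coloring is valid (a star edge coloring of `(V, Es)`) if it is proper and no
path or cycle formed by four edges of `Es` is colored with only two colors.  A path or
cycle of length four consists of vertices `v₀, v₁, v₂, v₃, v₄` with consecutive edges in
`Es`, all distinct except that possibly `v₀ = v₄` (the cycle case). -/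
def IsValid (Es : Set (Sym2 V)) (f : Sym2 V → C) : Prop :=
  IsProper Es f ∧
  ∀ v₀ v₁ v₂ v₃ v₄ : V,
    s(v₀, v₁) ∈ Es → s(v₁, v₂) ∈ Es → s(v₂, v₃) ∈ Es → s(v₃, v₄) ∈ Es →
    ([v₀, v₁, v₂, v₃] : List V).Nodup → ([v₁, v₂, v₃, v₄] : List V).Nodup →
    ¬ ∃ c₁ c₂ : C,
      (f s(v₀, v₁) = c₁ ∨ f s(v₀, v₁) = c₂) ∧ (f s(v₁, v₂) = c₁ ∨ f s(v₁, v₂) = c₂) ∧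
      (f s(v₂, v₃) = c₁ ∨ f s(v₂, v₃) = c₂) ∧ (f s(v₃, v₄) = c₁ ∨ f s(v₃, v₄) = c₂)

/-!
A vertex `v₁` in the first intersection carries an edge `v₀v₁` of `ER` colored `c₂` and begins a
walk `v₁v₂v₃v₄` in `EL` colored `c₁, c₂, c₁`. Since `EL` and `ER` are disjoint, `v₀v₁` and `v₁v₂`
are distinct, so properness gives `c₁ ≠ c₂`. In a properly colored simple graph a walk of three
edges colored `a, b, a` with `a ≠ b` is a path; applied to `v₀v₁v₂v₃` and to `v₁v₂v₃v₄`, this makes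
`v₀v₁v₂v₃v₄` a path or cycle of four edges with two colors. The other half is symmetric.
-/

section

variable {G : SimpleGraph V} {Es : Set (Sym2 V)} {f : Sym2 V → C} {v₀ v₁ v₂ v₃ v₄ : V}

theorem IsProper.eq_of_color_eq (hf : IsProper Es f) (h₁ : s(v₀, v₁) ∈ Es) (h₂ : s(v₀, v₂) ∈ Es)
    (hcolor : f s(v₀, v₁) = f s(v₀, v₂)) : v₁ = v₂ := by
  by_contra hne
  exact hf _ h₁ _ h₂ (mt Sym2.congr_right.mp hne)
    ⟨v₀, Sym2.mem_mk_left _ _, Sym2.mem_mk_left _ _⟩ hcolor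

theorem IsProper.nodup_of_alternating (hf : IsProper Es f) (hG : Es ⊆ G.edgeSet)
    (h₀₁ : s(v₀, v₁) ∈ Es) (h₁₂ : s(v₁, v₂) ∈ Es) (h₂₃ : s(v₂, v₃) ∈ Es)
    (hne : f s(v₀, v₁) ≠ f s(v₁, v₂)) (heq : f s(v₀, v₁) = f s(v₂, v₃)) :
    [v₀, v₁, v₂, v₃].Nodup := by
  have ne₀₁ : v₀ ≠ v₁ := G.ne_of_adj (hG h₀₁)
  have ne₁₂ : v₁ ≠ v₂ := G.ne_of_adj (hG h₁₂)
  have ne₂₃ : v₂ ≠ v₃ := G.ne_of_adj (hG h₂₃)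
  have ne₀₂ : v₀ ≠ v₂ := by
    rintro rfl
    exact hne (congrArg f Sym2.eq_swap)
  have ne₁₃ : v₁ ≠ v₃ := by
    rintro rfl
    exact hne (heq.trans (congrArg f Sym2.eq_swap))
  have ne₀₃ : v₀ ≠ v₃ := by
    rintro rfl
    rw [Sym2.eq_swap (a := v₂)] at h₂₃ heq
    exact ne₁₂ (hf.eq_of_color_eq h₀₁ h₂₃ heq)
  simp [ne₀₁, ne₀₂, ne₀₃, ne₁₂, ne₁₃, ne₂₃]

theorem IsValid.color_ne_of_alternating (hf : IsValid Es f) (hG : Es ⊆ G.edgeSet)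
    (h₀₁ : s(v₀, v₁) ∈ Es) (h₁₂ : s(v₁, v₂) ∈ Es) (h₂₃ : s(v₂, v₃) ∈ Es) (h₃₄ : s(v₃, v₄) ∈ Es)
    (hne : f s(v₀, v₁) ≠ f s(v₁, v₂)) (heq : f s(v₀, v₁) = f s(v₂, v₃)) :
    f s(v₁, v₂) ≠ f s(v₃, v₄) := by
  intro heq'
  have nodup₀₃ : [v₀, v₁, v₂, v₃].Nodup := hf.1.nodup_of_alternating hG h₀₁ h₁₂ h₂₃ hne heq
  have nodup₁₄ : [v₁, v₂, v₃, v₄].Nodup :=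
    hf.1.nodup_of_alternating hG h₁₂ h₂₃ h₃₄ (heq ▸ hne.symm) heq'
  exact hf.2 v₀ v₁ v₂ v₃ v₄ h₀₁ h₁₂ h₂₃ h₃₄ nodup₀₃ nodup₁₄
    ⟨f s(v₀, v₁), f s(v₁, v₂), .inl rfl, .inr rfl, .inl heq.symm, .inr heq'.symm⟩

theorem IsValid.disjoint_N4_N7 {E₁ E₂ : Set (Sym2 V)} (hf : IsValid Es f) (hG : Es ⊆ G.edgeSet)
    (h₁ : E₁ ⊆ Es) (h₂ : E₂ ⊆ Es) (hdisj : Disjoint E₁ E₂) (X Y : Set V) (c₁ c₂ : C) :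
    Disjoint (N4 X E₁ f c₁ c₂) (N7 Y E₂ f c₁ c₂) := by
  rw [Set.disjoint_left]
  rintro v₁ ⟨-, v₂, v₃, v₄, h₁₂, h₂₃, h₃₄, color₁₂, color₂₃, color₃₄⟩ ⟨-, v₀, h₁₀, color₁₀⟩
  have color_ne : f s(v₁, v₀) ≠ f s(v₁, v₂) := by
    intro hcolor
    obtain rfl : v₀ = v₂ := hf.1.eq_of_color_eq (h₂ h₁₀) (h₁ h₁₂) hcolor
    exact Set.disjoint_left.mp hdisj h₁₂ h₁₀
  rw [Sym2.eq_swap] at h₁₀ color₁₀ color_ne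
  exact hf.color_ne_of_alternating hG (h₂ h₁₀) (h₁ h₁₂) (h₁ h₂₃) (h₁ h₃₄) color_ne
    (color₁₀.trans color₂₃.symm) (color₁₂.trans color₃₄.symm)

end

theorem valid_condition_iv_general (G : SimpleGraph V) (XL XR : Set V) (EL ER : Set (Sym2 V))
    (hELG : EL ⊆ G.edgeSet) (hERG : ER ⊆ G.edgeSet) (hdisj : Disjoint EL ER)
    (f : Sym2 V → C) (hf : IsValid (EL ∪ ER) f) (c₁ c₂ : C) :
    N4 XL EL f c₁ c₂ ∩ N7 XR ER f c₁ c₂ = ∅ ∧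
    N4 XR ER f c₁ c₂ ∩ N7 XL EL f c₁ c₂ = ∅ := by
  have hG : EL ∪ ER ⊆ G.edgeSet := Set.union_subset hELG hERG
  have hL : EL ⊆ EL ∪ ER := Set.subset_union_left
  have hR : ER ⊆ EL ∪ ER := Set.subset_union_right
  exact ⟨(hf.disjoint_N4_N7 hG hL hR hdisj XL XR c₁ c₂).inter_eq,
    (hf.disjoint_N4_N7 hG hR hL hdisj.symm XR XL c₁ c₂).inter_eq⟩

theorem valid_condition_iv
    [Fintype V] [Fintype C] (G : SimpleGraph V)
    (Xi XL XR : Set V) (v' v'' : V)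
    (hXL : XL = Xi)
    (hv' : Xi \ XR = {v'}) (hv'' : XR \ Xi = {v''})
    (EL ER : Set (Sym2 V)) (hELG : EL ⊆ G.edgeSet) (hERG : ER ⊆ G.edgeSet)
    (hdisj : Disjoint EL ER)
    (hERv : ∀ e ∈ ER, v' ∉ e)
    (hELv : ∀ e ∈ EL, v'' ∉ e)
    (hshare : ∀ v : V, (∃ e ∈ EL, v ∈ e) → (∃ e ∈ ER, v ∈ e) → v ∈ Xi \ {v'})
    (f : Sym2 V → C) (hf : IsValid (EL ∪ ER) f) (c₁ c₂ : C) :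
    N4 XL EL f c₁ c₂ ∩ N7 XR ER f c₁ c₂ = ∅ ∧
    N4 XR ER f c₁ c₂ ∩ N7 XL EL f c₁ c₂ = ∅ :=
  valid_condition_iv_general G XL XR EL ER hELG hERG hdisj f hf c₁ c₂
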